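/- Let K be a field. For every countable ordinal α with 0 < α < ω_1 there exists a K-algebra R_α which is a semiartinian von Neumann regular ring with primitive factors artinian of Loewy length exactly α+1, all of whose layers L_β (β < α) are countably generated while the top layer L_α is isomorphic to K; in particular R_α is left and right hereditary, and R_α embeds as a K-subalgebra of K^ω. -/

import Mathlib

set_option synthInstance.maxHeartbeats 1000000
set_option maxHeartbeats 2000000


universe u

open Submodule Function

/-- The socle of a module: the supremum of all simple submodules. -/
def moduleSocle (R : Type*) (M : Type*) [Ring R] [AddCommGroup M] [Module R M] :
    Submodule R M :=
  sSup {W : Submodule R M | IsSimpleModule R ↥W}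

/-- A ring is right semiartinian if every nonzero quotient of the right module `R_R`
has a nonzero socle. -/
def IsRightSemiartinian (R : Type u) [Ring R] : Prop :=
  ∀ I : Submodule Rᵐᵒᵖ R, I ≠ ⊤ → moduleSocle Rᵐᵒᵖ (R ⧸ I) ≠ ⊥

/-- The right socle sequence of a ring: `S_0 = 0`, `S_{α+1}/S_α = Soc(R/S_α)`,
and unions at limits. -/
noncomputable def socleSeq (R : Type u) [Ring R] : Ordinal.{u} → Submodule Rᵐᵒᵖ R :=
  fun o => Ordinal.limitRecOn o ⊥
    (fun _ S => Submodule.comap S.mkQ (moduleSocle Rᵐᵒᵖ (R ⧸ S)))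
    (fun o _ ih => ⨆ (β : Ordinal.{u}) (h : β < o), ih β h)

/-- `S_α`, viewed as a submodule of `S_{α+1}`; the kernel of the `α`-th layer
epimorphism `π_α : S_{α+1} → S_{α+1}/S_α`. -/
noncomputable def layerKer (R : Type u) [Ring R] (α : Ordinal.{u}) :
    Submodule Rᵐᵒᵖ ↥(socleSeq R (α + 1)) :=
  (socleSeq R α).comap (socleSeq R (α + 1)).subtype

/-- The `α`-th layer `L_α = S_{α+1}/S_α` of a ring. -/
noncomputable abbrev Layer (R : Type u) [Ring R] (α : Ordinal.{u}) :=
  ↥(socleSeq R (α + 1)) ⧸ layerKer R α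

/-- A module `M` is weakly `R`-projective if for each `0 < α ≤ σ`, every homomorphism
`f : M → L_α` with finitely generated image factors through the `α`-th layer
epimorphism `π_α : S_{α+1} → L_α`. -/
def WeaklyRProjective (R : Type u) [Ring R] (σ : Ordinal.{u})
    (M : Type u) [AddCommGroup M] [Module Rᵐᵒᵖ M] : Prop :=
  ∀ α : Ordinal.{u}, 0 < α → α ≤ σ →
    ∀ f : M →ₗ[Rᵐᵒᵖ] Layer R α, (LinearMap.range f).FG →
      ∃ g : M →ₗ[Rᵐᵒᵖ] ↥(socleSeq R (α + 1)), (layerKer R α).mkQ ∘ₗ g = f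

/-- A ring is von Neumann regular if each `r` admits `s` with `r * s * r = r`. -/
def IsVNRegular (R : Type u) [Ring R] : Prop :=
  ∀ r : R, ∃ s : R, r * s * r = r

/-- The annihilator of a right `R`-module, as a submodule of the right module `R_R`. -/
def rightAnnihilator (R : Type u) [Ring R] (M : Type u) [AddCommGroup M]
    [Module Rᵐᵒᵖ M] : Submodule Rᵐᵒᵖ R where
  carrier := {r : R | ∀ m : M, MulOpposite.op r • m = 0}
  add_mem' := by
    intro a b ha hb m
    rw [MulOpposite.op_add, add_smul, ha m, hb m, add_zero]
  zero_mem' := by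
    intro m
    rw [MulOpposite.op_zero, zero_smul]
  smul_mem' := by
    intro c r hr m
    have h : MulOpposite.op (c • r) = c * MulOpposite.op r := by
      rw [MulOpposite.smul_eq_mul_unop, MulOpposite.op_mul, MulOpposite.op_unop]
    rw [h, mul_smul, hr m, smul_zero]

/-- A ring has (right) primitive factors artinian if, for each right primitive
(two-sided) ideal `P`, i.e. the annihilator of a simple right module, the factor
`R/P` is (right) artinian. -/
def HasPFA (R : Type u) [Ring R] : Prop :=
  ∀ (M : Type u) [AddCommGroup M] [Module Rᵐᵒᵖ M], IsSimpleModule Rᵐᵒᵖ M →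
    IsArtinian Rᵐᵒᵖ (R ⧸ rightAnnihilator R M)

/-- The additive equivalence `φ` from the layer `L_α = S_{α+1}/S_α` of `R` to a
(non-unital) ring `A` respects the multiplication induced from `R`: note that for
`x, y ∈ S_{α+1}` the product `x * y` equals `op y • x ∈ S_{α+1}`.  Together with
additivity this says that `φ` is an isomorphism of rings without unit. -/
def RespectsLayerMul (R : Type u) [Ring R] (α : Ordinal.{u}) {A : Type u} [Mul A] [Add A]
    (φ : Layer R α ≃+ A) : Prop :=
  ∀ x y : ↥(socleSeq R (α + 1)),
    φ (Submodule.Quotient.mk (MulOpposite.op (y : R) • x)) =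
      φ (Submodule.Quotient.mk x) * φ (Submodule.Quotient.mk y)

/-!
Let `X` be a compact Hausdorff zero-dimensional space and `R` the ring of locally constant
functions `X → K`. By compactness, a function lies in an ideal `J` of `R` as soon as, at each
point where it does not vanish, some member of `J` does not vanish. So the ideals are the sets
`I(A)` of functions vanishing on a closed set `A`, and the socle of `R / I(A)` comes from the
isolated points of `A`: its preimage in `R` is `I(B)`, with `B` the derived set of `A`. Hence the
socle sequence of `R` consists of the functions vanishing on the Cantor–Bendixson derivatives of
`X`.

For `X` the ordinal interval `[1, ω ^ α]`, the `β`-th derivative is the set of multiples of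
`ω ^ β`, so that the `α`-th one is `{ω ^ α}` and the next one is empty. If `α` is countable, `X`
is countable and has only countably many clopen sets, so `R` has countably many idempotents. An
ideal of a regular ring being generated by its idempotents, each ideal of `R` is generated by
countably many of them, and making these orthogonal shows that it is projective.
-/

universe v w

section Modules

theorem projective_of_dual_basis {R M ι : Type*} [Ring R] [AddCommGroup M] [Module R M]
    (φ : ι → M →ₗ[R] R) (m : ι → M) (hfin : ∀ x, (support fun i => φ i x).Finite)
    (hsum : ∀ x, ∑ᶠ i, φ i x • m i = x) : Module.Projective R M := by
  let coord : M →ₗ[R] ι →₀ R :=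
    { toFun := fun x => Finsupp.ofSupportFinite (fun i => φ i x) (hfin x)
      map_add' := fun x y => by ext i; exact map_add (φ i) x y
      map_smul' := fun c x => by ext i; exact map_smul (φ i) c x }
  refine Module.Projective.of_split coord (Finsupp.linearCombination R m)
    (LinearMap.ext fun x => ?_)
  calc Finsupp.linearCombination R m (coord x)
      = ∑ i ∈ (hfin x).toFinset, φ i x • m i := rfl
    _ = ∑ᶠ i, φ i x • m i := by
        refine (finsum_eq_sum_of_support_subset _ fun i hi => ?_).symm
        simp only [Set.Finite.coe_toFinset, mem_support]
        exact left_ne_zero_of_smul hi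
    _ = x := hsum x

theorem exists_countable_span_quotient_eq_top {R M : Type*} [Ring R] [AddCommGroup M] [Module R M]
    {J : Submodule R M} (hJ : ∃ S : Set M, S.Countable ∧ span R S = J) (L : Submodule R J) :
    ∃ S : Set (J ⧸ L), S.Countable ∧ span R S = ⊤ := by
  obtain ⟨S, hS, rfl⟩ := hJ
  refine ⟨L.mkQ '' ((↑) ⁻¹' S), (hS.preimage Subtype.val_injective).image _, ?_⟩
  rw [span_image, span_span_coe_preimage, Submodule.map_top, range_mkQ]

end Modules

section IdempotentSeq

open Finset

variable {R : Type*} [CommRing R] {e : ℕ → R}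

theorem prod_one_sub_mul_eq_zero (he : ∀ n, IsIdempotentElem (e n)) {n N : ℕ} (h : n < N) :
    (∏ i ∈ range N, (1 - e i)) * e n = 0 := by
  rw [← mul_prod_erase _ _ (mem_range.2 h), mul_right_comm, (he n).one_sub_mul_self, zero_mul]

theorem exists_prod_one_sub_mul_eq_zero (he : ∀ n, IsIdempotentElem (e n)) {x : R}
    (hx : x ∈ Ideal.span (Set.range e)) :
    ∃ N, ∀ n ≥ N, (∏ i ∈ range n, (1 - e i)) * x = 0 := by
  induction hx using Submodule.span_induction with
  | mem x hx =>
    obtain ⟨k, rfl⟩ := hx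
    exact ⟨k + 1, fun n hn => prod_one_sub_mul_eq_zero he hn⟩
  | zero => exact ⟨0, fun n _ => mul_zero _⟩
  | add x y _ _ hx hy =>
    obtain ⟨N, hN⟩ := hx
    obtain ⟨M, hM⟩ := hy
    refine ⟨max N M, fun n hn => ?_⟩
    rw [mul_add, hN n (le_of_max_le_left hn), hM n (le_of_max_le_right hn), add_zero]
  | smul c x _ hx =>
    obtain ⟨N, hN⟩ := hx
    exact ⟨N, fun n hn => by rw [smul_eq_mul, mul_left_comm, hN n hn, mul_zero]⟩

/-- The idempotents `f n = (1 - e 0) ⋯ (1 - e (n - 1)) * e n` are orthogonal, and `x ↦ f n * x` is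
the coordinate along `f n`. -/
theorem projective_span_range_of_isIdempotentElem (he : ∀ n, IsIdempotentElem (e n)) :
    Module.Projective R (Ideal.span (Set.range e)) := by
  let P : ℕ → R := fun n => ∏ i ∈ range n, (1 - e i)
  have hP : ∀ n, IsIdempotentElem (P n) := fun n => by
    simp only [P, IsIdempotentElem, ← prod_mul_distrib, (he _).one_sub.eq]
  let f : ℕ → R := fun n => P n * e n
  have hf : ∀ n, IsIdempotentElem (f n) := fun n => (hP n).mul (he n)
  have hfP : ∀ n, f n = P n - P (n + 1) := fun n => by
    simp only [f, P, prod_range_succ]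
    ring
  have hfx : ∀ x : Ideal.span (Set.range e), ∃ N, P N * x = 0 ∧ ∀ n ≥ N, f n * x = 0 := by
    intro x
    obtain ⟨N, hN⟩ := exists_prod_one_sub_mul_eq_zero he x.2
    refine ⟨N, hN N le_rfl, fun n hn => ?_⟩
    rw [hfP, sub_mul, hN n hn, hN (n + 1) (hn.trans n.le_succ), sub_zero]
  refine projective_of_dual_basis (fun n => f n • Submodule.subtype _)
    (fun n => ⟨f n, Ideal.mul_mem_left _ _ (Ideal.subset_span ⟨n, rfl⟩)⟩) (fun x => ?_) fun x => ?_
  · obtain ⟨N, -, hN⟩ := hfx x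
    exact (Set.finite_Iio N).subset fun n hn => not_le.1 fun h => hn (hN n h)
  · obtain ⟨N, hPN, hN⟩ := hfx x
    rw [finsum_eq_sum_of_support_subset (s := range N) _ fun n hn => ?_]
    · ext
      calc _ = ∑ n ∈ range N, f n * x * f n := by simp
        _ = ∑ n ∈ range N, (P n - P (n + 1)) * x :=
            sum_congr rfl fun n _ => by rw [mul_right_comm, (hf n).eq, hfP]
        _ = x := by rw [← sum_mul, sum_range_sub', sub_mul, hPN]; simp [P]
    · exact mem_coe.2 (mem_range.2 (not_le.1 fun h => hn (by simp [hN n h])))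

end IdempotentSeq

section Regular

/-- A ring as a right module over itself is free of rank one over its opposite ring. -/
def rightRegularEquiv (R : Type*) [Ring R] : R ≃ₗ[Rᵐᵒᵖ] Rᵐᵒᵖ :=
  { MulOpposite.opAddEquiv with map_smul' := fun _ _ => rfl }

theorem IsVNRegular.op {R : Type v} [Ring R] (hR : IsVNRegular R) : IsVNRegular Rᵐᵒᵖ := fun r => by
  obtain ⟨s, hs⟩ := hR r.unop
  exact ⟨.op s, MulOpposite.unop_injective (by simpa [mul_assoc] using hs)⟩

theorem countable_setOf_isIdempotentElem_op {R : Type*} [Ring R]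
    (h : {e : R | IsIdempotentElem e}.Countable) : {e : Rᵐᵒᵖ | IsIdempotentElem e}.Countable :=
  (h.preimage MulOpposite.unop_injective).mono fun _ he => congrArg MulOpposite.unop he

variable {R : Type v} [CommRing R]

theorem IsVNRegular.exists_span_range_idempotents_eq (hR : IsVNRegular R)
    (hc : {e : R | IsIdempotentElem e}.Countable) (I : Ideal R) :
    ∃ e : ℕ → R, (∀ n, IsIdempotentElem (e n)) ∧ Ideal.span (Set.range e) = I := by
  have hcI : {e | IsIdempotentElem e ∧ e ∈ I}.Countable := hc.mono fun _ h => h.1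
  obtain ⟨e, he⟩ := hcI.exists_eq_range ⟨0, .zero, I.zero_mem⟩
  have hmem : ∀ n, IsIdempotentElem (e n) ∧ e n ∈ I := fun n => he.ge ⟨n, rfl⟩
  refine ⟨e, fun n => (hmem n).1, le_antisymm (Ideal.span_le.2 ?_) fun r hr => ?_⟩
  · rintro _ ⟨n, rfl⟩
    exact (hmem n).2
  · obtain ⟨s, hs⟩ := hR r
    have hrs : r * s ∈ Set.range e := he.le
      ⟨by rw [IsIdempotentElem, ← mul_assoc, hs], I.mul_mem_right s hr⟩
    rw [← hs]
    exact Ideal.mul_mem_right _ _ (Ideal.subset_span hrs)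

theorem IsVNRegular.projective_ideal (hR : IsVNRegular R)
    (hc : {e : R | IsIdempotentElem e}.Countable) (I : Ideal R) : Module.Projective R I := by
  obtain ⟨e, he, rfl⟩ := hR.exists_span_range_idempotents_eq hc I
  exact projective_span_range_of_isIdempotentElem he

theorem IsVNRegular.projective_rightIdeal (hR : IsVNRegular R)
    (hc : {e : R | IsIdempotentElem e}.Countable) (J : Submodule Rᵐᵒᵖ R) :
    Module.Projective Rᵐᵒᵖ J :=
  have := hR.op.projective_ideal (countable_setOf_isIdempotentElem_op hc)
    (J.map (rightRegularEquiv R).toLinearMap)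
  Module.Projective.of_equiv ((rightRegularEquiv R).submoduleMap J).symm

theorem IsVNRegular.exists_countable_span_rightIdeal_eq (hR : IsVNRegular R)
    (hc : {e : R | IsIdempotentElem e}.Countable) (J : Submodule Rᵐᵒᵖ R) :
    ∃ S : Set R, S.Countable ∧ span Rᵐᵒᵖ S = J := by
  obtain ⟨e, -, he⟩ := hR.op.exists_span_range_idempotents_eq
    (countable_setOf_isIdempotentElem_op hc) (J.map (rightRegularEquiv R).toLinearMap)
  refine ⟨(rightRegularEquiv R).symm '' Set.range e, (Set.countable_range e).image _, ?_⟩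
  exact (map_span _ _).symm.trans ((map_symm_eq_iff _).2 he.symm)

end Regular

section Socle

variable {S M N : Type*} [Ring S] [AddCommGroup M] [Module S M] [AddCommGroup N] [Module S N]

theorem mem_moduleSocle_of_forall_smul {m : M}
    (h : ∀ s : S, s • m ≠ 0 → ∃ t : S, t • s • m = m) : m ∈ moduleSocle S M := by
  rcases eq_or_ne m 0 with rfl | hm
  · exact zero_mem _
  suffices IsSimpleModule S (span S {m}) from
    le_sSup (a := span S {m}) this (mem_span_singleton_self m)
  refine isSimpleModule_iff_isAtom.2 ⟨by simpa using hm, fun W hW => ?_⟩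
  by_contra hW0
  obtain ⟨w, hw, hw0⟩ := W.ne_bot_iff.1 hW0
  obtain ⟨s, rfl⟩ := mem_span_singleton.1 (hW.le hw)
  obtain ⟨t, ht⟩ := h s hw0
  exact hW.not_ge ((span_singleton_le_iff_mem _ _).2 (ht ▸ W.smul_mem t hw))

theorem map_moduleSocle_le (f : M →ₗ[S] N) : (moduleSocle S M).map f ≤ moduleSocle S N := by
  refine map_le_iff_le_comap.2 (sSup_le fun W (hW : IsSimpleModule S W) => ?_)
  rw [← map_le_iff_le_comap, ← LinearMap.range_domRestrict]
  rcases (f.domRestrict W).injective_or_eq_zero with hinj | h0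
  · have : IsSimpleModule S (LinearMap.range (f.domRestrict W)) :=
      .congr (LinearEquiv.ofInjective _ hinj).symm
    exact le_sSup this
  · rw [h0, LinearMap.range_zero]
    exact bot_le

end Socle

section SocleSeq

variable (R : Type u) [Ring R]

theorem socleSeq_zero : socleSeq R 0 = ⊥ :=
  Ordinal.limitRecOn_zero ..

theorem socleSeq_add_one (o : Ordinal.{u}) : socleSeq R (o + 1) =
    (moduleSocle Rᵐᵒᵖ (R ⧸ socleSeq R o)).comap (socleSeq R o).mkQ :=
  Ordinal.limitRecOn_add_one ..

theorem socleSeq_limit {o : Ordinal.{u}} (ho : Order.IsSuccLimit o) :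
    socleSeq R o = ⨆ β : Set.Iio o, socleSeq R β := by
  rw [iSup_subtype]
  exact Ordinal.limitRecOn_limit (h := ho) ..

variable {R}

theorem socleSeq_le_of_moduleSocle_quotient_eq_bot {I : Submodule Rᵐᵒᵖ R}
    (hI : moduleSocle Rᵐᵒᵖ (R ⧸ I) = ⊥) (o : Ordinal.{u}) : socleSeq R o ≤ I := by
  induction o using Ordinal.limitRecOn with
  | zero => exact (socleSeq_zero R).trans_le bot_le
  | add_one o ih =>
    intro x hx
    rw [socleSeq_add_one] at hx
    have : factor ih (mkQ _ x) ∈ moduleSocle Rᵐᵒᵖ (R ⧸ I) := map_moduleSocle_le _ ⟨_, hx, rfl⟩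
    rw [hI] at this
    exact (Submodule.Quotient.mk_eq_zero I).1 this
  | limit o ho ih =>
    rw [socleSeq_limit R ho]
    exact iSup_le fun β => ih β β.2

theorem isRightSemiartinian_of_socleSeq_eq_top {o : Ordinal.{u}} (ho : socleSeq R o = ⊤) :
    IsRightSemiartinian R := fun _ hI hsoc =>
  hI (top_le_iff.1 (ho.ge.trans (socleSeq_le_of_moduleSocle_quotient_eq_bot hsoc o)))

theorem exists_respectsLayerMul {A : Type u} [NonAssocRing A] {ev : R →+* A} (hev : Surjective ev)
    {α : Ordinal.{u}} (htop : socleSeq R (α + 1) = ⊤)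
    (hker : ∀ x, x ∈ socleSeq R α ↔ ev x = 0) :
    ∃ φ : Layer R α ≃+ A, RespectsLayerMul R α φ := by
  let f : socleSeq R (α + 1) →+ A :=
    ev.toAddMonoidHom.comp (socleSeq R (α + 1)).toAddSubgroup.subtype
  have hf : Surjective f := fun a => by
    obtain ⟨x, rfl⟩ := hev a
    exact ⟨⟨x, htop ▸ mem_top⟩, rfl⟩
  have hfker : (layerKer R α).toAddSubgroup = f.ker := by
    ext x
    exact hker x
  refine ⟨QuotientAddGroup.liftEquiv _ hf hfker, fun x y => ?_⟩
  exact map_mul ev _ _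

end SocleSeq

theorem hasPFA_of_commRing (R : Type u) [CommRing R] : HasPFA R := by
  intro M _ _ _
  have := IsSimpleModule.nontrivial Rᵐᵒᵖ M
  obtain ⟨m, hm⟩ := exists_ne (0 : M)
  let φ : R →ₗ[Rᵐᵒᵖ] M := LinearMap.toSpanSingleton Rᵐᵒᵖ M m ∘ₗ (rightRegularEquiv R).toLinearMap
  have hφ : Surjective φ :=
    (IsSimpleModule.toSpanSingleton_surjective Rᵐᵒᵖ hm).comp (rightRegularEquiv R).surjective
  have hker : LinearMap.ker φ = rightAnnihilator R M := by
    ext r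
    refine ⟨fun (hr : MulOpposite.op r • m = 0) x => ?_, fun hr => hr m⟩
    obtain ⟨s, rfl⟩ := hφ x
    change MulOpposite.op r • MulOpposite.op s • m = 0
    rw [smul_comm, hr, smul_zero]
  rw [← hker]
  exact isArtinian_of_linearEquiv (φ.quotKerEquivOfSurjective hφ).symm

section DerivedSet

theorem mem_derivedSet_iff_mem_closure {X : Type*} [TopologicalSpace X] {A : Set X} {x : X} :
    x ∈ derivedSet A ↔ x ∈ closure (A \ {x}) :=
  accPt_principal_iff_clusterPt.trans mem_closure_iff_clusterPt.symm

theorem derivedSet_singleton {X : Type*} [TopologicalSpace X] [T1Space X] (x : X) :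
    derivedSet {x} = ∅ := by
  refine Set.eq_empty_of_forall_notMem fun y hy => ?_
  obtain rfl : y = x := (isClosed_iff_derivedSet_subset _).1 isClosed_singleton hy
  rw [mem_derivedSet_iff_mem_closure, Set.sdiff_self, closure_empty] at hy
  exact hy

theorem isClosed_sdiff_singleton {X : Type*} [TopologicalSpace X] {A : Set X} {x : X}
    (hA : IsClosed A) (hx : x ∉ derivedSet A) : IsClosed (A \ {x}) := by
  refine isClosed_of_closure_subset fun y hy => ⟨closure_minimal Set.sdiff_subset hA hy, ?_⟩
  rintro rfl
  exact hx (mem_derivedSet_iff_mem_closure.2 hy)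

/-- `D` is the sequence of Cantor–Bendixson derivatives of the space `X`. This is a predicate,
rather than `CantorBendixson.iteratedDerivedSet Set.univ`, so that the universe of the ordinals need
not be that of `X`. -/
structure IsDerivedSequence {X : Type*} [TopologicalSpace X] (D : Ordinal.{w} → Set X) : Prop where
  zero : D 0 = Set.univ
  add_one (o : Ordinal.{w}) : D (o + 1) = derivedSet (D o)
  limit {o : Ordinal.{w}} (ho : Order.IsSuccLimit o) : D o = ⋂ β : Set.Iio o, D β

theorem IsDerivedSequence.isClosed {X : Type*} [TopologicalSpace X] [T1Space X]
    {D : Ordinal.{w} → Set X} (hD : IsDerivedSequence D) (o : Ordinal.{w}) : IsClosed (D o) := by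
  induction o using Ordinal.limitRecOn with
  | zero => exact hD.zero ▸ isClosed_univ
  | add_one o _ => exact hD.add_one o ▸ isClosed_derivedSet _
  | limit o ho ih => exact hD.limit ho ▸ isClosed_iInter fun β => ih β β.2

theorem IsDerivedSequence.antitone {X : Type*} [TopologicalSpace X] [T1Space X]
    {D : Ordinal.{w} → Set X} (hD : IsDerivedSequence D) : Antitone D := by
  intro a b hab
  induction b using Ordinal.limitRecOn with
  | zero => exact nonpos_iff_eq_zero.1 hab ▸ Set.Subset.rfl
  | add_one b ih =>
    rcases hab.eq_or_lt with rfl | h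
    · exact Set.Subset.rfl
    · rw [hD.add_one]
      exact ((isClosed_iff_derivedSet_subset _).1 (hD.isClosed b)).trans
        (ih (Order.lt_add_one_iff.1 h))
  | limit b hb _ =>
    rcases hab.eq_or_lt with rfl | h
    · exact Set.Subset.rfl
    · rw [hD.limit hb]
      exact Set.iInter_subset (fun β : Set.Iio b => D β) ⟨a, h⟩

end DerivedSet

section LocConst

variable {X : Type v} [TopologicalSpace X] {K : Type u} [Field K]

variable (X K) in
/-- The `K`-algebra of locally constant functions on `X`, as a subalgebra of the algebra of all
functions (whereas `LocallyConstant X K` is a type of bundled functions). -/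
def LocConst : Subalgebra K (X → K) where
  carrier := {f | IsLocallyConstant f}
  mul_mem' hf hg := IsLocallyConstant.mul hf hg
  add_mem' hf hg := IsLocallyConstant.add hf hg
  algebraMap_mem' := IsLocallyConstant.const

namespace LocConst

theorem isLocallyConstant_coe (f : LocConst X K) : IsLocallyConstant (f : X → K) :=
  f.2

theorem isVNRegular : IsVNRegular (LocConst X K) := fun f =>
  ⟨⟨fun x => (f.1 x)⁻¹, (isLocallyConstant_coe f).comp _⟩,
    Subtype.ext (funext fun x => mul_inv_mul_cancel (f.1 x))⟩

variable (K) in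
/-- The right ideal of locally constant functions that vanish on `A`. -/
def vanishing (A : Set X) : Submodule (LocConst X K)ᵐᵒᵖ (LocConst X K) where
  carrier := {f | ∀ x ∈ A, f.1 x = 0}
  add_mem' {f g} hf hg x hx := by
    change f.1 x + g.1 x = 0
    rw [hf x hx, hg x hx, add_zero]
  zero_mem' _ _ := rfl
  smul_mem' c f hf x hx := mul_eq_zero_of_left (hf x hx) (c.unop.1 x)

theorem vanishing_univ : vanishing K (Set.univ : Set X) = ⊥ :=
  eq_bot_iff.2 fun _ hf => Subtype.ext (funext fun x => hf x trivial)

theorem vanishing_eq_top_iff {A : Set X} : vanishing K A = ⊤ ↔ A = ∅ := by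
  refine ⟨fun h => Set.eq_empty_of_forall_notMem fun x hx => one_ne_zero (α := K) ?_, ?_⟩
  · exact (h ▸ mem_top : (1 : LocConst X K) ∈ vanishing K A) x hx
  · rintro rfl
    exact eq_top_iff.2 fun _ _ _ hx => hx.elim

theorem vanishing_anti {A B : Set X} (h : A ⊆ B) : vanishing K B ≤ vanishing K A :=
  fun _ hf x hx => hf x (h hx)

theorem exists_mul_mem_eq_one {J : Submodule (LocConst X K)ᵐᵒᵖ (LocConst X K)} {f : LocConst X K}
    (hf : ∀ x, f.1 x ≠ 0 → ∃ g ∈ J, g.1 x ≠ 0) (x : X) :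
    ∃ e : LocConst X K, f * e ∈ J ∧ e.1 x = 1 := by
  rcases eq_or_ne (f.1 x) 0 with h0 | h0
  · obtain ⟨s, hs⟩ := isVNRegular f
    refine ⟨1 - s * f, ?_, ?_⟩
    · rw [mul_sub, mul_one, ← mul_assoc, hs, sub_self]
      exact J.zero_mem
    · change 1 - s.1 x * f.1 x = 1
      rw [h0, mul_zero, sub_zero]
  · obtain ⟨g, hg, hgx⟩ := hf x h0
    refine ⟨g * algebraMap K _ (g.1 x)⁻¹, ?_, mul_inv_cancel₀ hgx⟩
    rw [mul_left_comm]
    exact J.smul_mem (.op (f * algebraMap K _ (g.1 x)⁻¹)) hg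

/-- Local membership at each point suffices, because finitely many of the open sets where the
functions `e` below equal `1` cover the space. -/
theorem mem_of_forall_ne_zero [CompactSpace X]
    {J : Submodule (LocConst X K)ᵐᵒᵖ (LocConst X K)} {f : LocConst X K}
    (hf : ∀ x, f.1 x ≠ 0 → ∃ g ∈ J, g.1 x ≠ 0) : f ∈ J := by
  suffices ∃ e : LocConst X K, f * e ∈ J ∧ ∀ x ∈ Set.univ, e.1 x = 1 by
    obtain ⟨e, he, he1⟩ := this
    have : e = 1 := Subtype.ext (funext fun x => he1 x trivial)
    rwa [this, mul_one] at he
  refine isCompact_univ.induction_on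
    (p := fun s => ∃ e : LocConst X K, f * e ∈ J ∧ ∀ x ∈ s, e.1 x = 1)
    ⟨0, by rw [mul_zero]; exact J.zero_mem, fun _ hx => hx.elim⟩ ?_ ?_ fun x _ => ?_
  · rintro s t hst ⟨e, he, het⟩
    exact ⟨e, he, fun x hx => het x (hst hx)⟩
  · rintro s t ⟨e, he, hes⟩ ⟨d, hd, hdt⟩
    refine ⟨e + d - e * d, ?_, ?_⟩
    · rw [mul_sub, mul_add, ← mul_assoc]
      exact J.sub_mem (J.add_mem he hd) (J.smul_mem (.op d) he)
    · rintro x (hx | hx)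
      · change e.1 x + d.1 x - e.1 x * d.1 x = 1
        rw [hes x hx]
        ring
      · change e.1 x + d.1 x - e.1 x * d.1 x = 1
        rw [hdt x hx]
        ring
  · obtain ⟨e, he, hex⟩ := exists_mul_mem_eq_one hf x
    have hnhds : {y | e.1 y = 1} ∈ nhds x := ((isLocallyConstant_coe e).isOpen_fiber 1).mem_nhds hex
    exact ⟨_, mem_nhdsWithin_of_mem_nhds hnhds, e, he, fun _ hy => hy⟩

theorem mkQ_mem_moduleSocle {A : Set X} {x : X} {e : LocConst X K}
    (he : e ∈ vanishing K (A \ {x})) :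
    (vanishing K A).mkQ e ∈ moduleSocle (LocConst X K)ᵐᵒᵖ (LocConst X K ⧸ vanishing K A) := by
  refine mem_moduleSocle_of_forall_smul fun s hs => ?_
  have hsx : s.unop.1 x ≠ 0 := fun h0 => hs <| (Submodule.Quotient.mk_eq_zero _).2 fun y hy => by
    change e.1 y * s.unop.1 y = 0
    rcases eq_or_ne y x with rfl | hyx
    · rw [h0, mul_zero]
    · rw [he y ⟨hy, hyx⟩, zero_mul]
  refine ⟨.op (algebraMap K _ (s.unop.1 x)⁻¹), (Submodule.Quotient.eq _).2 fun y hy => ?_⟩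
  change e.1 y * s.unop.1 y * (s.unop.1 x)⁻¹ - e.1 y = 0
  rcases eq_or_ne y x with rfl | hyx
  · rw [mul_inv_cancel_right₀ hsx, sub_self]
  · rw [he y ⟨hy, hyx⟩, zero_mul, zero_mul, sub_self]

theorem eq_zero_or_eq_one_of_isIdempotentElem {e : LocConst X K} (he : IsIdempotentElem e) (x : X) :
    e.1 x = 0 ∨ e.1 x = 1 :=
  IsIdempotentElem.iff_eq_zero_or_one.1 (congrFun (congrArg Subtype.val he) x)

section Separation

variable [CompactSpace X] [T2Space X] [TotallyDisconnectedSpace X]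

theorem exists_mem_vanishing_eq_one {A : Set X} (hA : IsClosed A) {x : X} (hx : x ∉ A) :
    ∃ e ∈ vanishing K A, e.1 x = 1 := by
  obtain ⟨U, hU, hxU, hUA⟩ := compact_exists_isClopen_in_isOpen hA.isOpen_compl hx
  refine ⟨⟨_, (LocallyConstant.charFn K hU).isLocallyConstant⟩, fun y hy => ?_, ?_⟩
  · exact Set.indicator_of_notMem (fun hyU => hUA hyU hy) _
  · exact Set.indicator_of_mem hxU _

theorem iSup_vanishing {ι : Sort*} {A : ι → Set X} (hA : ∀ i, IsClosed (A i)) :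
    ⨆ i, vanishing K (A i) = vanishing K (⋂ i, A i) := by
  refine le_antisymm (iSup_le fun i => vanishing_anti (Set.iInter_subset A i)) fun f hf =>
    mem_of_forall_ne_zero fun x hx => ?_
  obtain ⟨i, hi⟩ := not_forall.1 (mt Set.mem_iInter.2 (mt (hf x) hx))
  obtain ⟨e, he, hex⟩ := exists_mem_vanishing_eq_one (K := K) (hA i) hi
  exact ⟨e, le_iSup (fun i => vanishing K (A i)) i he, hex ▸ one_ne_zero⟩

variable {A : Set X}

theorem apply_eq_zero_of_mkQ_mem_simple (hA : IsClosed A)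
    {W : Submodule (LocConst X K)ᵐᵒᵖ (LocConst X K ⧸ vanishing K A)}
    (hW : IsSimpleModule (LocConst X K)ᵐᵒᵖ W) {f : LocConst X K}
    (hf : (vanishing K A).mkQ f ∈ W) {x : X} (hx : x ∈ derivedSet A) : f.1 x = 0 := by
  by_contra hfx
  have hU : {y | f.1 y = f.1 x} ∈ nhds x := ((isLocallyConstant_coe f).isOpen_fiber _).mem_nhds rfl
  obtain ⟨y, ⟨hyU, hyA⟩, hyx⟩ := accPt_iff_nhds.1 hx _ hU
  obtain ⟨e, hex, hey⟩ := exists_mem_vanishing_eq_one (K := K) (isClosed_singleton (x := x)) hyx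
  have hfe : (⟨_, W.smul_mem (.op e) hf⟩ : W) ≠ 0 := fun h => by
    have hfey : f.1 y * e.1 y = 0 :=
      (Submodule.Quotient.mk_eq_zero _).1 (congrArg Subtype.val h) y hyA
    rw [hey, mul_one, hyU] at hfey
    exact hfx hfey
  obtain ⟨s, hs⟩ :=
    IsSimpleModule.toSpanSingleton_surjective (LocConst X K)ᵐᵒᵖ hfe ⟨_, hf⟩
  have hfx' : f.1 x * e.1 x * s.unop.1 x - f.1 x = 0 :=
    (Submodule.Quotient.eq _).1 (congrArg Subtype.val hs) x
      ((isClosed_iff_derivedSet_subset A).1 hA hx)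
  rw [hex x rfl, mul_zero, zero_mul, zero_sub, neg_eq_zero] at hfx'
  exact hfx hfx'

theorem comap_moduleSocle_vanishing (hA : IsClosed A) :
    (moduleSocle (LocConst X K)ᵐᵒᵖ (LocConst X K ⧸ vanishing K A)).comap (vanishing K A).mkQ =
      vanishing K (derivedSet A) := by
  refine le_antisymm ?_ fun f hf => mem_of_forall_ne_zero fun x hx => ?_
  · have hsoc : moduleSocle (LocConst X K)ᵐᵒᵖ (LocConst X K ⧸ vanishing K A) ≤
        (vanishing K (derivedSet A)).map (vanishing K A).mkQ := by
      refine sSup_le fun W (hW : IsSimpleModule (LocConst X K)ᵐᵒᵖ W) w hw => ?_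
      obtain ⟨f, rfl⟩ := (vanishing K A).mkQ_surjective w
      exact mem_map_of_mem fun x hx => apply_eq_zero_of_mkQ_mem_simple hA hW hw hx
    refine (comap_mono hsoc).trans_eq ?_
    rw [comap_map_mkQ, sup_eq_right.2 (vanishing_anti ((isClosed_iff_derivedSet_subset A).1 hA))]
  · have hxA : x ∉ derivedSet A := mt (hf x) hx
    obtain ⟨e, he, hex⟩ := exists_mem_vanishing_eq_one (K := K)
      (isClosed_sdiff_singleton hA hxA) (fun h => h.2 rfl)
    exact ⟨e, mkQ_mem_moduleSocle he, hex ▸ one_ne_zero⟩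

theorem socleSeq_eq_vanishing {D : Ordinal.{max v u} → Set X} (hD : IsDerivedSequence D)
    (o : Ordinal.{max v u}) : socleSeq (LocConst X K) o = vanishing K (D o) := by
  induction o using Ordinal.limitRecOn with
  | zero => rw [socleSeq_zero, hD.zero, vanishing_univ]
  | add_one o ih =>
    rw [socleSeq_add_one, ih, hD.add_one, comap_moduleSocle_vanishing (hD.isClosed o)]
  | limit o ho ih =>
    rw [socleSeq_limit _ ho, hD.limit ho, ← iSup_vanishing fun β : Set.Iio o => hD.isClosed β]
    exact iSup_congr fun β => ih β β.2

theorem socleSeq_eq_top_iff {D : Ordinal.{max v u} → Set X} (hD : IsDerivedSequence D)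
    {o : Ordinal.{max v u}} : socleSeq (LocConst X K) o = ⊤ ↔ D o = ∅ := by
  rw [socleSeq_eq_vanishing hD, vanishing_eq_top_iff]

variable (X K) in
theorem countable_setOf_isIdempotentElem [SecondCountableTopology X] :
    {e : LocConst X K | IsIdempotentElem e}.Countable := by
  have : Countable (TopologicalSpace.Clopens X) :=
    TopologicalSpace.Clopens.countable_iff_secondCountable.2 inferInstance
  let supp : LocConst X K → TopologicalSpace.Clopens X := fun e =>
    ⟨{x | e.1 x = 1}, (isLocallyConstant_coe e).isClopen_fiber 1⟩
  refine Set.countable_of_injective_of_countable_image (f := supp) (fun e he d hd hed => ?_)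
    (Set.to_countable _)
  refine Subtype.ext (funext fun x => ?_)
  have hx : e.1 x = 1 ↔ d.1 x = 1 := Set.ext_iff.1 (congrArg (↑) hed) x
  rcases eq_zero_or_eq_one_of_isIdempotentElem he x with h | h
  all_goals rcases eq_zero_or_eq_one_of_isIdempotentElem hd x with h' | h'
  all_goals simp_all

end Separation

end LocConst

end LocConst

section OrdinalInterval

open Ordinal Topology

variable {b o x : Ordinal.{w}}

theorem mul_add_one_le_of_dvd {q y : Ordinal.{w}} (hy : b ∣ y) (h : b * q < y) :
    b * (q + 1) ≤ y := by
  obtain ⟨z, rfl⟩ := hy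
  exact mul_le_mul_right (Order.add_one_le_of_lt (lt_of_mul_lt_mul_left' h)) b

theorem mul_omega0_dvd_iff_forall_lt (hb : 0 < b) (hx : x ≠ 0) :
    b * ω ∣ x ↔ ∀ a < x, ∃ y, b ∣ y ∧ a < y ∧ y < x := by
  refine ⟨?_, fun h => ?_⟩
  · rintro ⟨c, rfl⟩ a ha
    rw [mul_assoc] at ha hx ⊢
    have hlim : Order.IsSuccLimit (ω * c) := isSuccLimit_iff.2
      ⟨right_ne_zero_of_mul hx, isSuccPrelimit_iff_omega0_dvd.2 (dvd_mul_right ω c)⟩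
    obtain ⟨d, hd, had⟩ := (lt_mul_iff_of_isSuccLimit hlim).1 ha
    exact ⟨b * d, dvd_mul_right b d, had, mul_lt_mul_of_pos_left hd hb⟩
  · have hbx : b ∣ x := by
      by_contra hdvd
      obtain ⟨y, hy, hlt, hyx⟩ :=
        h (b * (x / b)) ((mul_div_le x b).lt_of_ne fun he => hdvd ⟨_, he.symm⟩)
      exact (mul_add_one_le_of_dvd hy hlt).not_gt (hyx.trans (lt_mul_succ_div x hb.ne'))
    obtain ⟨q, rfl⟩ := hbx
    refine mul_dvd_mul_left b (isSuccPrelimit_iff_omega0_dvd.1 fun p (hp : p ⋖ q) => ?_)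
    obtain ⟨y, hy, hlt, hyq⟩ := h (b * p) (mul_lt_mul_of_pos_left hp.lt hb)
    exact (mul_add_one_le_of_dvd hy hlt).not_gt (Order.covBy_iff_add_one_eq.1 hp ▸ hyq)

theorem omega0_opow_dvd_iff_of_isSuccLimit (ho : Order.IsSuccLimit o) :
    ω ^ o ∣ x ↔ ∀ β < o, ω ^ β ∣ x := by
  refine ⟨fun h β hβ => (opow_dvd_opow ω hβ.le).trans h, fun h => dvd_of_mod_eq_zero ?_⟩
  by_contra hr
  obtain ⟨β, hβ, hlt⟩ := (lt_opow_of_isSuccLimit omega0_ne_zero ho).1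
    (mod_lt x (opow_ne_zero o omega0_ne_zero))
  have hdvd : ω ^ β ∣ x % ω ^ o :=
    (dvd_add_iff ((opow_dvd_opow ω hβ.le).mul_right _)).1 ((div_add_mod x (ω ^ o)).symm ▸ h β hβ)
  exact (le_of_dvd hr hdvd).not_gt hlt

variable {X : Type*} [TopologicalSpace X] {p : X → Ordinal.{w}} {T : Ordinal.{w}}

theorem derivedSet_eq_preimage_of_isEmbedding {Y : Type*} [TopologicalSpace Y] {f : X → Y}
    (hf : IsEmbedding f) (A : Set X) : derivedSet A = f ⁻¹' derivedSet (f '' A) := by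
  ext x
  rw [mem_derivedSet_iff_mem_closure, Set.mem_preimage, mem_derivedSet_iff_mem_closure,
    hf.closure_eq_preimage_closure_image, Set.image_sdiff hf.injective, Set.image_singleton,
    Set.mem_preimage]

theorem derivedSet_setOf_dvd (hp : IsEmbedding p) (hrange : Set.range p = Set.Icc 1 T)
    (hb : 0 < b) : derivedSet {i | b ∣ p i} = {i | b * ω ∣ p i} := by
  have hmem : ∀ i, 1 ≤ p i ∧ p i ≤ T := fun i => hrange.le ⟨i, rfl⟩
  have hpos : ∀ i, 0 < p i := fun i => zero_lt_one.trans_le (hmem i).1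
  ext i
  rw [derivedSet_eq_preimage_of_isEmbedding hp, Set.mem_preimage, mem_derivedSet,
    SuccOrder.accPt_principal, Set.mem_ofPred_eq, mul_omega0_dvd_iff_forall_lt hb (hpos i).ne']
  constructor
  · rintro ⟨-, h⟩ a ha
    obtain ⟨_, ⟨j, hj, rfl⟩, haj, hji⟩ := h a ha
    exact ⟨p j, hj, haj, hji⟩
  · refine fun h => ⟨not_isMin_of_lt (hpos i), fun a ha => ?_⟩
    obtain ⟨y, hy, hay, hyi⟩ := h a ha
    obtain ⟨j, rfl⟩ : y ∈ Set.range p :=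
      hrange ▸ ⟨Order.one_le_iff_pos.2 (bot_le.trans_lt hay), hyi.le.trans (hmem i).2⟩
    exact ⟨p j, ⟨j, hy, rfl⟩, hay, hyi⟩

theorem isDerivedSequence_setOf_opow_dvd (hp : IsEmbedding p)
    (hrange : Set.range p = Set.Icc 1 T) : IsDerivedSequence fun o => {i | ω ^ o ∣ p i} where
  zero := by simp
  add_one o := by rw [derivedSet_setOf_dvd hp hrange (opow_pos o omega0_pos), opow_add, opow_one]
  limit ho := by
    ext i
    simp [omega0_opow_dvd_iff_of_isSuccLimit ho]

theorem countable_Icc_omega0_opow {α : Ordinal.{u}} (hα : α < (Cardinal.aleph 1).ord) :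
    (Set.Icc 1 (ω ^ α)).Countable := by
  have hω : ω < (Cardinal.aleph.{u} 1).ord := by
    rw [Cardinal.lt_ord, card_omega0]
    exact Cardinal.aleph0_lt_aleph_one
  have hlt : Order.succ (ω ^ α) < (Cardinal.aleph.{u} 1).ord :=
    (Cardinal.isSuccLimit_ord (Cardinal.aleph0_le_aleph 1)).succ_lt
      (isPrincipal_opow_ord (Cardinal.aleph0_le_aleph 1) hω hα)
  refine Set.Countable.mono (s₂ := Set.Iio (Order.succ (ω ^ α)))
    (fun x hx => Order.lt_succ_of_le hx.2) ?_
  rw [← Cardinal.le_aleph0_iff_set_countable, Cardinal.mk_Iio_ordinal, Cardinal.lift_le_aleph0,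
    ← Cardinal.lt_aleph_one_iff, ← Cardinal.lt_ord]
  exact hlt

theorem infinite_Icc_omega0_opow {α : Ordinal.{u}} (hα : 0 < α) :
    (Set.Icc 1 (ω ^ α)).Infinite := by
  refine Set.infinite_of_injective_forall_mem (f := fun n : ℕ => (n : Ordinal.{u}) + 1)
    (fun m n h => by simpa using h) fun n => ⟨by simp, ?_⟩
  calc (n : Ordinal.{u}) + 1 = (n + 1 : ℕ) := by push_cast; rfl
    _ ≤ ω := (natCast_lt_omega0 _).le
    _ ≤ ω ^ α := left_le_opow ω hα

/-- The interval `[1, ω ^ α]`, transported to `ℕ` along an enumeration. -/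
theorem exists_topology_nat_isDerivedSequence {α : Ordinal.{u}} (h0 : 0 < α)
    (hα : α < (Cardinal.aleph 1).ord) :
    ∃ (_ : TopologicalSpace ℕ) (_ : CompactSpace ℕ) (_ : T2Space ℕ) (_ : SecondCountableTopology ℕ)
      (D : Ordinal.{u} → Set ℕ) (t : ℕ), IsDerivedSequence D ∧ D α = {t} := by
  have := (countable_Icc_omega0_opow hα).to_subtype
  have := (infinite_Icc_omega0_opow h0).to_subtype
  obtain ⟨e⟩ := nonempty_equiv_of_countable (α := ℕ) (β := Set.Icc 1 (ω ^ α))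
  let τ : TopologicalSpace ℕ := .induced e inferInstance
  let h : ℕ ≃ₜ Set.Icc 1 (ω ^ α) := e.toHomeomorphOfIsInducing ⟨rfl⟩
  have hD := isDerivedSequence_setOf_opow_dvd (p := fun n => (e n : Ordinal.{u}))
    (IsEmbedding.subtypeVal.comp h.isEmbedding)
    ((EquivLike.range_comp Subtype.val e).trans Subtype.range_coe)
  let t : Set.Icc 1 (ω ^ α) := ⟨ω ^ α, Order.one_le_iff_pos.2 (opow_pos α omega0_pos), le_rfl⟩
  refine ⟨τ, h.symm.compactSpace, h.symm.t2Space, h.secondCountableTopology, _, e.symm t, hD, ?_⟩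
  ext n
  rw [Set.mem_ofPred_eq, Set.mem_singleton_iff, Equiv.eq_symm_apply]
  refine ⟨fun hn => Subtype.ext ?_, fun hn => hn ▸ dvd_rfl⟩
  exact (e n).2.2.antisymm (le_of_dvd (zero_lt_one.trans_le (e n).2.1).ne' hn)

end OrdinalInterval

/-- Example 10 of the paper: for every countable ordinal
`0 < α < ω₁` there exists a `K`-subalgebra `R_α` of `K^ω` which is a semiartinian von
Neumann regular ring with primitive factors artinian of Loewy length exactly `α + 1`,
all of whose layers `L_β` (`β < α`) are countably generated, whose top layer `L_α` is
isomorphic to `K` (as a ring without unit), and which is left and right hereditary. -/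
theorem exists_hereditary_algebra_of_loewy_length (K : Type u) [Field K]
    (α : Ordinal.{u}) (h0 : 0 < α) (hα : α < (Cardinal.aleph 1).ord) :
    ∃ R' : Subalgebra K (ℕ → K),
      IsVNRegular ↥R' ∧
      IsRightSemiartinian ↥R' ∧
      HasPFA ↥R' ∧
      IsLeast {o : Ordinal.{u} | socleSeq ↥R' o = ⊤} (α + 1) ∧
      (∀ β : Ordinal.{u}, β < α →
        ∃ S : Set (Layer ↥R' β), S.Countable ∧ Submodule.span (↥R')ᵐᵒᵖ S = ⊤) ∧
      (∃ φ : Layer ↥R' α ≃+ K, RespectsLayerMul ↥R' α φ) ∧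
      (∀ I : Submodule (↥R')ᵐᵒᵖ ↥R', Module.Projective (↥R')ᵐᵒᵖ ↥I) ∧
      (∀ I : Ideal ↥R', Module.Projective ↥R' ↥I) := by
  obtain ⟨_, _, _, _, D, t, hD, hDα⟩ := exists_topology_nat_isDerivedSequence h0 hα
  have hreg := LocConst.isVNRegular (X := ℕ) (K := K)
  have hcount := LocConst.countable_setOf_isIdempotentElem ℕ K
  have htop : socleSeq (LocConst ℕ K) (α + 1) = ⊤ := by
    rw [LocConst.socleSeq_eq_top_iff hD, hD.add_one, hDα, derivedSet_singleton]
  have hleast : ∀ o, socleSeq (LocConst ℕ K) o = ⊤ → α + 1 ≤ o := fun o ho => by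
    by_contra hlt
    have htD : t ∈ D o := hD.antitone (Order.lt_add_one_iff.1 (not_le.1 hlt)) (hDα.ge rfl)
    exact Set.notMem_empty t ((LocConst.socleSeq_eq_top_iff hD).1 ho ▸ htD)
  refine ⟨LocConst ℕ K, hreg, isRightSemiartinian_of_socleSeq_eq_top htop, hasPFA_of_commRing _,
    ⟨htop, hleast⟩, fun β _ => ?_, ?_, hreg.projective_rightIdeal hcount,
    hreg.projective_ideal hcount⟩
  · exact exists_countable_span_quotient_eq_top
      (hreg.exists_countable_span_rightIdeal_eq hcount _) _
  · refine exists_respectsLayerMul (ev := (Pi.evalRingHom _ t).comp (LocConst ℕ K).val.toRingHom)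
      (fun c => ⟨algebraMap K _ c, rfl⟩) htop fun f => ?_
    rw [LocConst.socleSeq_eq_vanishing hD, hDα]
    exact forall_eq
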